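/- Let μ, ψ, ρ, p_t, p_m, T > 0 with T > μ·(ρ/p_t)^(1/3), set q_t* = (p_t/ρ)^(1/3) and q_m* = ψ/(T − μ·(ρ/p_t)^(1/3)), and assume p_m ≥ ρ·(q_m*)³. Then among all q_m > 0 satisfying the constraints μ/q_t* + ψ/q_m ≤ T and (ψ/q_m)·p_m − ρ·ψ·q_m² ≥ 0, the client utility U(q_t*, q_m) = (μ/q_t*)·p_t + (ψ/q_m)·p_m − ρ·μ·(q_t*)² − ρ·ψ·q_m² is (uniquely) maximized at q_m = q_m*. -/

import Mathlib

/-- The payoff of one phase (training or mining) of a client: a phase of workload `w` run at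
speed `q` lasts `w / q`, is paid `p` per unit of time and costs energy `ρ * w * q ^ 2`.
It is meaningful only for `0 < q`. -/
noncomputable def phasePayoff (w ρ p q : ℝ) : ℝ :=
  w / q * p - ρ * w * q ^ 2

section PhasePayoff

variable {w ρ p : ℝ}

lemma phasePayoff_nonneg_iff {q : ℝ} (hw : 0 < w) (hq : 0 < q) :
    0 ≤ phasePayoff w ρ p q ↔ ρ * q ^ 3 ≤ p := by
  have factor : phasePayoff w ρ p q = w / q * (p - ρ * q ^ 3) := by
    unfold phasePayoff
    field_simp
  rw [factor, mul_nonneg_iff_of_pos_left (div_pos hw hq), sub_nonneg]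

lemma phasePayoff_strictAntiOn (hw : 0 < w) (hρ : 0 < ρ) (hp : 0 ≤ p) :
    StrictAntiOn (phasePayoff w ρ p) (Set.Ioi 0) := by
  intro x (hx : 0 < x) y _ hxy
  have payment_le : w / y * p ≤ w / x * p := by gcongr
  have energy_lt : ρ * w * x ^ 2 < ρ * w * y ^ 2 := by gcongr
  unfold phasePayoff
  linarith

variable {t q : ℝ}

lemma phasePayoff_le_of_div_le (hw : 0 < w) (hρ : 0 < ρ) (hp : 0 ≤ p) (ht : 0 < t) (hq : 0 < q)
    (hqt : w / q ≤ t) : phasePayoff w ρ p q ≤ phasePayoff w ρ p (w / t) :=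
  (phasePayoff_strictAntiOn hw hρ hp).antitoneOn (div_pos hw ht) hq ((div_le_comm₀ hq ht).1 hqt)

lemma phasePayoff_lt_of_div_le (hw : 0 < w) (hρ : 0 < ρ) (hp : 0 ≤ p) (ht : 0 < t) (hq : 0 < q)
    (hqt : w / q ≤ t) (hne : q ≠ w / t) : phasePayoff w ρ p q < phasePayoff w ρ p (w / t) :=
  phasePayoff_strictAntiOn hw hρ hp (div_pos hw ht) hq
    (((div_le_comm₀ hq ht).1 hqt).lt_of_ne' hne)

end PhasePayoff

lemma div_div_rpow_eq_mul {x y : ℝ} (hx : 0 ≤ x) (hy : 0 ≤ y) (a z : ℝ) :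
    a / (x / y) ^ z = a * (y / x) ^ z := by
  rw [div_eq_mul_inv, ← Real.inv_rpow (div_nonneg hx hy), inv_div]

theorem stmt_6_general {μ ψ ρ pt pm T qt qm : ℝ} (hψ : 0 < ψ) (hρ : 0 < ρ) (hqt : 0 < qt)
    (hμT : μ < T * qt) (hqm : qm = ψ / (T - μ / qt)) (hpm : ρ * qm ^ 3 ≤ pm) {U : ℝ → ℝ → ℝ}
    (hU : ∀ x y, U x y = (μ / x) * pt + (ψ / y) * pm - ρ * μ * x ^ 2 - ρ * ψ * y ^ 2) :
    (0 < qm ∧ μ / qt + ψ / qm ≤ T ∧ 0 ≤ (ψ / qm) * pm - ρ * ψ * qm ^ 2) ∧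
    (∀ q, 0 < q → μ / qt + ψ / q ≤ T → U qt q ≤ U qt qm) ∧
    (∀ q, 0 < q → μ / qt + ψ / q ≤ T → q ≠ qm → U qt q < U qt qm) := by
  have time_left : 0 < T - μ / qt := sub_pos.2 ((div_lt_iff₀ hqt).2 hμT)
  have qm_pos : 0 < qm := hqm ▸ div_pos hψ time_left
  have pm_nonneg : 0 ≤ pm := (by positivity : 0 ≤ ρ * qm ^ 3).trans hpm
  have time_eq : μ / qt + ψ / qm = T := by
    rw [hqm, div_div_cancel₀ hψ.ne', add_sub_cancel]
  have utility_eq (x y) : U x y = phasePayoff μ ρ pt x + phasePayoff ψ ρ pm y := by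
    rw [hU, phasePayoff, phasePayoff]
    ring
  refine ⟨⟨qm_pos, time_eq.le, (phasePayoff_nonneg_iff hψ qm_pos).2 hpm⟩,
    fun q hq hqT => ?_, fun q hq hqT hne => ?_⟩ <;> rw [utility_eq, utility_eq, hqm]
  · have := phasePayoff_le_of_div_le hψ hρ pm_nonneg time_left hq (le_sub_iff_add_le'.2 hqT)
    gcongr
  · have := phasePayoff_lt_of_div_le hψ hρ pm_nonneg time_left hq (le_sub_iff_add_le'.2 hqT)
      (hqm ▸ hne)
    gcongr

/-- Maximality content of Theorem 1 along the slice where the training constraint binds: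
among all `q_m > 0` satisfying the time and mining-payoff constraints, the utility
`U(q_t*, q_m)` is uniquely maximized at `q_m = q_m*`. -/
theorem stmt_6 (μ ψ ρ pt pm T : ℝ) (hμ : 0 < μ) (hψ : 0 < ψ) (hρ : 0 < ρ) (hpt : 0 < pt)
    (hpm : 0 < pm) (hT : 0 < T) (hTμ : μ * (ρ / pt) ^ ((1 : ℝ) / 3) < T)
    (qt qm : ℝ) (hqt : qt = (pt / ρ) ^ ((1 : ℝ) / 3))
    (hqm : qm = ψ / (T - μ * (ρ / pt) ^ ((1 : ℝ) / 3)))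
    (hpm' : pm ≥ ρ * qm ^ 3)
    (U : ℝ → ℝ → ℝ)
    (hU : ∀ x y, U x y = (μ / x) * pt + (ψ / y) * pm - ρ * μ * x ^ 2 - ρ * ψ * y ^ 2) :
    (0 < qm ∧ μ / qt + ψ / qm ≤ T ∧ (ψ / qm) * pm - ρ * ψ * qm ^ 2 ≥ 0) ∧
    (∀ q : ℝ, 0 < q → μ / qt + ψ / q ≤ T → (ψ / q) * pm - ρ * ψ * q ^ 2 ≥ 0 →
      U qt q ≤ U qt qm) ∧
    (∀ q : ℝ, 0 < q → μ / qt + ψ / q ≤ T → (ψ / q) * pm - ρ * ψ * q ^ 2 ≥ 0 →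
      q ≠ qm → U qt q < U qt qm) := by
  have qt_pos : 0 < qt := hqt ▸ Real.rpow_pos_of_pos (div_pos hpt hρ) _
  rw [← div_div_rpow_eq_mul hpt.le hρ.le, ← hqt] at hTμ hqm
  obtain ⟨feasible, le_max, lt_max⟩ :=
    stmt_6_general hψ hρ qt_pos ((div_lt_iff₀ qt_pos).1 hTμ) hqm hpm' hU
  exact ⟨feasible, fun q hq hqT _ => le_max q hq hqT, fun q hq hqT _ => lt_max q hq hqT⟩
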